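/- arXiv:2401.14951 — 5 statements merged into one kernel-verified Lean document; each statement's English description precedes it below -/
import Mathlib

section
/- Let $w : \mathbb{C} \times \mathbb{R} \to \mathbb{C} \times \mathbb{C} \times \mathbb{R}$ be $w(z,t) = \big(z(1+t)/\sqrt{2+2t^2},\ \overline{z}(1-t)/\sqrt{2+2t^2},\ -t^2\big)$, viewed as a map of real normed vector spaces. Then $w$ is infinitely differentiable (of class $C^\infty$ over $\mathbb{R}$), and the real Fréchet derivative of $w$ at a point $(z,t)$ is injective if and only if $(z,t) \neq (0,0)$. -/
/-- The local model map `w(z,t) = (z(1+t)/√(2+2t²), z̄(1-t)/√(2+2t²), -t²)`. -/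
noncomputable def w (p : ℂ × ℝ) : ℂ × ℂ × ℝ :=
  (p.1 * ((1 + p.2 : ℝ) : ℂ) / ((Real.sqrt (2 + 2 * p.2 ^ 2) : ℝ) : ℂ),
   (starRingEnd ℂ) p.1 * ((1 - p.2 : ℝ) : ℂ) / ((Real.sqrt (2 + 2 * p.2 ^ 2) : ℝ) : ℂ),
   -p.2 ^ 2)

/-!
Put `a(t) = (1+t)/√(2+2t²)` and `b(t) = a(-t)`, so that `w(z,t) = (a(t) z, b(t) z̄, -t²)`. Up to
conjugating its second component, the derivative at `(z,t)` sends `(v,s)` to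
`(a v + a' s z, b v + b' s z, -2ts)`. Its first two components vanish only if `v = 0` and `s z = 0`,
because the Wronskian `a b' - a' b = -(a² + b²)/(1+t²) = -1/(1+t²)` never vanishes. So `(v,s)` is in
the kernel precisely when `v = 0`, `s z = 0` and `t s = 0`.
-/

lemma smul_add_smul_eq_zero_iff_of_det_ne_zero {R M : Type*} [CommRing R] [IsDomain R]
    [AddCommGroup M] [Module R M] [Module.IsTorsionFree R M] {a b c d : R}
    (hdet : a * d - b * c ≠ 0) {x y : M} :
    a • x + b • y = 0 ∧ c • x + d • y = 0 ↔ x = 0 ∧ y = 0 := by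
  refine ⟨fun ⟨h₁, h₂⟩ => ?_, fun ⟨hx, hy⟩ => by simp [hx, hy]⟩
  have hx : (a * d - b * c) • x = d • (a • x + b • y) - b • (c • x + d • y) := by module
  have hy : (a * d - b * c) • y = a • (c • x + d • y) - c • (a • x + b • y) := by module
  simpa [h₁, h₂, hdet] using And.intro hx hy

section ScaledPair

variable {𝕜 E F G : Type*} [NontriviallyNormedField 𝕜]
  [NormedAddCommGroup E] [NormedSpace 𝕜 E] [NormedAddCommGroup F] [NormedSpace 𝕜 F]
  [NormedAddCommGroup G] [NormedSpace 𝕜 G]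
  {a b : 𝕜 → 𝕜} {c : 𝕜 → G} {σ : E →L[𝕜] F}

/-- The map `(z, t) ↦ (a(t) z, b(t) σ(z), c(t))`. The map `w` is of this form, with `σ` the complex
conjugation, seen as an `ℝ`-linear map. -/
def scaledPair (a b : 𝕜 → 𝕜) (c : 𝕜 → G) (σ : E →L[𝕜] F) (p : E × 𝕜) : E × F × G :=
  (a p.2 • p.1, b p.2 • σ p.1, c p.2)

lemma contDiff_scaledPair {n : WithTop ℕ∞} (ha : ContDiff 𝕜 n a) (hb : ContDiff 𝕜 n b)
    (hc : ContDiff 𝕜 n c) : ContDiff 𝕜 n (scaledPair a b c σ) := by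
  unfold scaledPair
  fun_prop

variable {a' b' : 𝕜} {c' : G} {p : E × 𝕜}

lemma fderiv_scaledPair_apply (ha : HasDerivAt a a' p.2) (hb : HasDerivAt b b' p.2)
    (hc : HasDerivAt c c' p.2) (v : E) (s : 𝕜) :
    fderiv 𝕜 (scaledPair a b c σ) p (v, s) =
      (a p.2 • v + a' • s • p.1, σ (b p.2 • v + b' • s • p.1), s • c') := by
  have hz : HasFDerivAt Prod.fst (ContinuousLinearMap.fst 𝕜 E 𝕜) p := hasFDerivAt_fst
  have ht : HasFDerivAt Prod.snd (ContinuousLinearMap.snd 𝕜 E 𝕜) p := hasFDerivAt_snd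
  have hw : HasFDerivAt (scaledPair a b c σ) _ p :=
    ((ha.comp_hasFDerivAt p ht).smul hz).prodMk
      (((hb.comp_hasFDerivAt p ht).smul (σ.hasFDerivAt.comp p hz)).prodMk
        (hc.hasFDerivAt.comp p ht))
  simp [hw.fderiv, smul_smul]

theorem injective_fderiv_scaledPair_iff (ha : HasDerivAt a a' p.2) (hb : HasDerivAt b b' p.2)
    (hc : HasDerivAt c c' p.2) (hσ : Function.Injective σ)
    (hwronskian : a p.2 * b' - a' * b p.2 ≠ 0) :
    Function.Injective (fderiv 𝕜 (scaledPair a b c σ) p) ↔ p.1 ≠ 0 ∨ c' ≠ 0 := by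
  have mem_ker_iff (v : E) (s : 𝕜) : fderiv 𝕜 (scaledPair a b c σ) p (v, s) = 0 ↔
      v = 0 ∧ (s = 0 ∨ p.1 = 0 ∧ c' = 0) := by
    rw [fderiv_scaledPair_apply ha hb hc, Prod.mk_eq_zero, Prod.mk_eq_zero,
      map_eq_zero_iff σ hσ, ← and_assoc, smul_add_smul_eq_zero_iff_of_det_ne_zero hwronskian,
      smul_eq_zero, smul_eq_zero]
    tauto
  rw [injective_iff_map_eq_zero, Prod.forall]
  simp only [mem_ker_iff, Prod.mk_eq_zero]
  refine ⟨fun h => ?_, by tauto⟩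
  by_contra! hdeg
  exact one_ne_zero (h 0 1 ⟨rfl, .inr hdeg⟩).2

end ScaledPair

/-- The coefficient `a(t) = (1+t)/√(2+2t²)` of `z` in the first component of `w`; the coefficient
of `z̄` in the second component is `a(-t)`. -/
noncomputable def wCoeff (t : ℝ) : ℝ := (1 + t) / Real.sqrt (2 + 2 * t ^ 2)

lemma contDiff_wCoeff {n : WithTop ℕ∞} : ContDiff ℝ n wCoeff := by
  have hpos (t : ℝ) : 0 < 2 + 2 * t ^ 2 := by positivity
  exact ContDiff.div (by fun_prop) (ContDiff.sqrt (by fun_prop) fun t => (hpos t).ne')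
    fun t => (Real.sqrt_pos.2 (hpos t)).ne'

lemma hasDerivAt_wCoeff (t : ℝ) : HasDerivAt wCoeff (wCoeff (-t) / (1 + t ^ 2)) t := by
  have hpos : 0 < 2 + 2 * t ^ 2 := by positivity
  have hsqrt : Real.sqrt (2 + 2 * t ^ 2) ≠ 0 := (Real.sqrt_pos.2 hpos).ne'
  have hradicand : HasDerivAt (fun t : ℝ => 2 + 2 * t ^ 2) (2 * (2 * t)) t := by
    simpa using ((hasDerivAt_pow 2 t).const_mul 2).const_add 2
  refine (((hasDerivAt_id t).const_add 1).div (hradicand.sqrt hpos.ne') hsqrt).congr_deriv ?_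
  simp only [wCoeff, neg_sq, id]
  field_simp
  rw [Real.sq_sqrt (by positivity)]
  ring

lemma hasDerivAt_wCoeff_neg (t : ℝ) :
    HasDerivAt (fun t => wCoeff (-t)) (-(wCoeff t / (1 + t ^ 2))) t :=
  ((hasDerivAt_wCoeff (-t)).scomp t (hasDerivAt_neg t)).congr_deriv (by simp)

lemma wCoeff_sq_add_wCoeff_neg_sq (t : ℝ) : wCoeff t ^ 2 + wCoeff (-t) ^ 2 = 1 := by
  have hpos : 0 < 2 + 2 * t ^ 2 := by positivity
  simp only [wCoeff, neg_sq, div_pow, Real.sq_sqrt hpos.le]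
  field_simp
  ring

lemma wCoeff_wronskian (t : ℝ) :
    wCoeff t * -(wCoeff t / (1 + t ^ 2)) - wCoeff (-t) / (1 + t ^ 2) * wCoeff (-t) =
      -(1 + t ^ 2)⁻¹ := by
  linear_combination -(1 + t ^ 2)⁻¹ * wCoeff_sq_add_wCoeff_neg_sq t

lemma w_eq_scaledPair :
    w = scaledPair wCoeff (fun t => wCoeff (-t)) (fun t => -t ^ 2) Complex.conjCLE := by
  funext p
  refine Prod.ext ?_ (Prod.ext ?_ rfl)
  · simp only [w, scaledPair, wCoeff, Complex.real_smul, Complex.ofReal_div]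
    ring
  · simp only [w, scaledPair, wCoeff, neg_sq, ← sub_eq_add_neg, ContinuousLinearEquiv.coe_coe,
      Complex.conjCLE_apply, Complex.real_smul, Complex.ofReal_div]
    ring

theorem injective_fderiv_w_iff (p : ℂ × ℝ) :
    Function.Injective (fderiv ℝ w p) ↔ p ≠ 0 := by
  have hsq : HasDerivAt (fun t : ℝ => -t ^ 2) (-(2 * p.2)) p.2 := by
    simpa using (hasDerivAt_pow 2 p.2).fun_neg
  have hwronskian := (wCoeff_wronskian p.2).trans_ne (neg_ne_zero.2 (by positivity))
  rw [w_eq_scaledPair, injective_fderiv_scaledPair_iff (hasDerivAt_wCoeff p.2)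
    (hasDerivAt_wCoeff_neg p.2) hsq Complex.conjCLE.injective hwronskian]
  simp [Prod.ext_iff, imp_iff_not_or]

theorem contDiff_w {n : WithTop ℕ∞} : ContDiff ℝ n w := by
  rw [w_eq_scaledPair]
  exact contDiff_scaledPair contDiff_wCoeff (contDiff_wCoeff.comp contDiff_neg) (by fun_prop)

theorem stmt3 :
    ContDiff ℝ (⊤ : ℕ∞) w ∧
    ∀ p : ℂ × ℝ, Function.Injective (fderiv ℝ w p) ↔ p ≠ ((0 : ℂ), (0 : ℝ)) :=
  ⟨contDiff_w, injective_fderiv_w_iff⟩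
end

section
/- Define $w'(z,t) = (z,\ zt,\ -t^2)$, $\xi(z,t) = \big(z/\sqrt{2+2t^2},\ t\big)$, and $\zeta(\alpha,\beta,s) = \big(\alpha+\beta,\ \overline{\alpha}-\overline{\beta},\ s\big)$, all as maps between $\mathbb{C}\times\mathbb{R}$ and $\mathbb{C}\times\mathbb{C}\times\mathbb{R}$ as appropriate. Then: (a) $\zeta \circ w' \circ \xi = w$, where $w(z,t) = \big(z(1+t)/\sqrt{2+2t^2},\ \overline{z}(1-t)/\sqrt{2+2t^2},\ -t^2\big)$; (b) $\xi$ is a bijection of $\mathbb{C}\times\mathbb{R}$ which is $C^\infty$ over $\mathbb{R}$ with $C^\infty$ inverse $(z,t) \mapsto (z\sqrt{2+2t^2},\ t)$; (c) $\zeta$ is a bijective $\mathbb{R}$-linear map of $\mathbb{C}\times\mathbb{C}\times\mathbb{R}$. -/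
/-- The generalized cross-cap normal form `w'(z,t) = (z, zt, -t²)`. -/
noncomputable def w' (p : ℂ × ℝ) : ℂ × ℂ × ℝ :=
  (p.1, p.1 * (p.2 : ℂ), -p.2 ^ 2)

/-- The source diffeomorphism `ξ(z,t) = (z/√(2+2t²), t)`. -/
noncomputable def ξ (p : ℂ × ℝ) : ℂ × ℝ :=
  (p.1 / ((Real.sqrt (2 + 2 * p.2 ^ 2) : ℝ) : ℂ), p.2)

/-- The inverse of `ξ`: `(z,t) ↦ (z·√(2+2t²), t)`. -/
noncomputable def ξinv (p : ℂ × ℝ) : ℂ × ℝ :=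
  (p.1 * ((Real.sqrt (2 + 2 * p.2 ^ 2) : ℝ) : ℂ), p.2)

/-- The target linear isomorphism `ζ(α,β,s) = (α+β, ᾱ-β̄, s)`. -/
noncomputable def ζ (q : ℂ × ℂ × ℝ) : ℂ × ℂ × ℝ :=
  (q.1 + q.2.1, (starRingEnd ℂ) q.1 - (starRingEnd ℂ) q.2.1, q.2.2)

section FiberwiseSMul

variable {R V X : Type*}

/-- The self-map of the trivial bundle `V × X → X` that multiplies the fibre over `x` by the scalar
`a x`. Both `ξ` and `ξinv` have this form, which is why the fibre is the first factor. -/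
def fiberwiseSMul [SMul R V] (a : X → R) (p : V × X) : V × X :=
  (a p.2 • p.1, p.2)

theorem leftInverse_fiberwiseSMul [Monoid R] [MulAction R V] {a b : X → R}
    (h : ∀ x, b x * a x = 1) :
    Function.LeftInverse (fiberwiseSMul b) (fiberwiseSMul a : V × X → V × X) := fun p =>
  Prod.ext (by simp only [fiberwiseSMul, smul_smul, h, one_smul]) rfl

theorem contDiff_fiberwiseSMul {𝕜 : Type*} [NontriviallyNormedField 𝕜]
    [NormedRing R] [NormedAlgebra 𝕜 R] [NormedAddCommGroup V] [NormedSpace 𝕜 V] [Module R V]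
    [IsBoundedSMul R V] [IsScalarTower 𝕜 R V] [NormedAddCommGroup X] [NormedSpace 𝕜 X]
    {n : WithTop ℕ∞} {a : X → R} (ha : ContDiff 𝕜 n a) :
    ContDiff 𝕜 n (fiberwiseSMul a : V × X → V × X) :=
  ((ha.comp contDiff_snd).smul contDiff_fst).prodMk contDiff_snd

end FiberwiseSMul

theorem sqrt_two_add_two_mul_sq_ne_zero (t : ℝ) : √(2 + 2 * t ^ 2) ≠ 0 :=
  Real.sqrt_ne_zero'.mpr (by positivity)

theorem contDiff_sqrt_two_add_two_mul_sq {n : WithTop ℕ∞} :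
    ContDiff ℝ n fun t : ℝ => √(2 + 2 * t ^ 2) :=
  ContDiff.sqrt (by fun_prop) fun t => by positivity

theorem ξ_eq_fiberwiseSMul : ξ = fiberwiseSMul fun t : ℝ => (√(2 + 2 * t ^ 2))⁻¹ := by
  funext p
  simp only [ξ, fiberwiseSMul, Complex.real_smul, Complex.ofReal_inv, div_eq_inv_mul]

theorem ξinv_eq_fiberwiseSMul : ξinv = fiberwiseSMul fun t : ℝ => √(2 + 2 * t ^ 2) := by
  funext p
  simp only [ξinv, fiberwiseSMul, Complex.real_smul, mul_comm]

theorem leftInverse_ξinv_ξ : Function.LeftInverse ξinv ξ := by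
  rw [ξ_eq_fiberwiseSMul, ξinv_eq_fiberwiseSMul]
  exact leftInverse_fiberwiseSMul fun t => mul_inv_cancel₀ (sqrt_two_add_two_mul_sq_ne_zero t)

theorem rightInverse_ξinv_ξ : Function.RightInverse ξinv ξ := by
  rw [ξ_eq_fiberwiseSMul, ξinv_eq_fiberwiseSMul]
  exact leftInverse_fiberwiseSMul fun t => inv_mul_cancel₀ (sqrt_two_add_two_mul_sq_ne_zero t)

theorem bijective_ξ : Function.Bijective ξ :=
  ⟨leftInverse_ξinv_ξ.injective, rightInverse_ξinv_ξ.surjective⟩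

theorem contDiff_ξ {n : WithTop ℕ∞} : ContDiff ℝ n ξ := by
  rw [ξ_eq_fiberwiseSMul]
  exact contDiff_fiberwiseSMul
    (contDiff_sqrt_two_add_two_mul_sq.inv sqrt_two_add_two_mul_sq_ne_zero)

theorem contDiff_ξinv {n : WithTop ℕ∞} : ContDiff ℝ n ξinv := by
  rw [ξinv_eq_fiberwiseSMul]
  exact contDiff_fiberwiseSMul contDiff_sqrt_two_add_two_mul_sq

/-- The linear automorphism `(x, y) ↦ (x + y, x - y)` of `M × M`, for `2` invertible in the scalars.
It is the part of `ζ` that does not involve conjugation. -/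
def addSubLinearEquiv (R M : Type*) [Ring R] [Invertible (2 : R)] [AddCommGroup M] [Module R M] :
    (M × M) ≃ₗ[R] M × M where
  toFun p := (p.1 + p.2, p.1 - p.2)
  map_add' p q := Prod.ext (add_add_add_comm _ _ _ _) (add_sub_add_comm _ _ _ _)
  map_smul' c p := Prod.ext (smul_add _ _ _).symm (smul_sub _ _ _).symm
  invFun p := ((⅟2 : R) • (p.1 + p.2), (⅟2 : R) • (p.1 - p.2))
  left_inv p := Prod.ext
    (by simp only [add_add_sub_cancel, ← two_smul R, invOf_smul_smul])
    (by simp only [add_sub_sub_cancel, ← two_smul R, invOf_smul_smul])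
  right_inv p := Prod.ext
    (by simp only [← smul_add, add_add_sub_cancel, ← two_smul R, invOf_smul_smul])
    (by simp only [← smul_sub, add_sub_sub_cancel, ← two_smul R, invOf_smul_smul])

/-- The map `ζ` as a real-linear automorphism: `(α, β) ↦ (α + β, α - β)`, then conjugation of the
second coordinate. -/
noncomputable def ζEquiv : (ℂ × ℂ × ℝ) ≃ₗ[ℝ] ℂ × ℂ × ℝ :=
  (LinearEquiv.prodAssoc ℝ ℂ ℂ ℝ).symm ≪≫ₗ
    (addSubLinearEquiv ℝ ℂ).prodCongr (.refl ℝ ℝ) ≪≫ₗ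
    LinearEquiv.prodAssoc ℝ ℂ ℂ ℝ ≪≫ₗ
    (LinearEquiv.refl ℝ ℂ).prodCongr (Complex.conjAe.toLinearEquiv.prodCongr (.refl ℝ ℝ))

theorem coe_ζEquiv : ⇑ζEquiv = ζ := by
  funext q
  exact Prod.ext rfl (Prod.ext (map_sub (starRingEnd ℂ) q.1 q.2.1) rfl)

theorem isLinearMap_ζ : IsLinearMap ℝ ζ :=
  coe_ζEquiv ▸ ζEquiv.toLinearMap.isLinear

theorem bijective_ζ : Function.Bijective ζ :=
  coe_ζEquiv ▸ ζEquiv.bijective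

theorem ζ_w'_apply (z : ℂ) (t : ℝ) :
    ζ (w' (z, t)) =
      (z * ((1 + t : ℝ) : ℂ), starRingEnd ℂ z * ((1 - t : ℝ) : ℂ), -t ^ 2) := by
  simp only [ζ, w', map_mul, Complex.conj_ofReal, Complex.ofReal_add, Complex.ofReal_sub,
    Complex.ofReal_one, mul_add, mul_sub, mul_one]

theorem ζ_comp_w'_comp_ξ : ζ ∘ w' ∘ ξ = w := by
  funext p
  simp only [Function.comp_apply, ξ, ζ_w'_apply, w, map_div₀, Complex.conj_ofReal,
    div_mul_eq_mul_div]

theorem stmt5 :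
    (ζ ∘ w' ∘ ξ = w) ∧
    (Function.Bijective ξ ∧ ContDiff ℝ (⊤ : ℕ∞) ξ ∧ ContDiff ℝ (⊤ : ℕ∞) ξinv ∧
      Function.LeftInverse ξinv ξ ∧ Function.RightInverse ξinv ξ) ∧
    (IsLinearMap ℝ ζ ∧ Function.Bijective ζ) :=
  ⟨ζ_comp_w'_comp_ξ,
    ⟨bijective_ξ, contDiff_ξ, contDiff_ξinv, leftInverse_ξinv_ξ, rightInverse_ξinv_ξ⟩,
    isLinearMap_ζ, bijective_ζ⟩
end

section
/- Let $k \ge 1$ be an integer and define $f : \mathbb{C}^2 \to \mathbb{C}^3$ by $f(u,v) = (u,\ v^2,\ v^3 + u^{k+1}v)$. Then the closure in $\mathbb{C}^2$ of the set $\{(u,v) : \exists (u',v') \neq (u,v) \text{ with } f(u,v) = f(u',v')\}$ equals $\{(u,v) \in \mathbb{C}^2 : v^2 + u^{k+1} = 0\}$. -/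
/-- Mond's simple germ `S_k : (u,v) ↦ (u, v², v³ + u^{k+1} v)`. -/
def Sk (k : ℕ) (q : ℂ × ℂ) : ℂ × ℂ × ℂ :=
  (q.1, q.2 ^ 2, q.2 ^ 3 + q.1 ^ (k + 1) * q.2)

/-!
Over a point `x`, the map `(x, v) ↦ (x, v², v p(x, v²))` can only identify `v` with `-v`, and it
does so exactly when `v p(x, v²) = 0`. Its double points are therefore the points of the curve
`p(x, v²) = 0` off the fold locus `v = 0`. For `p(x, w) = w + g(x)`, a point `(x₀, 0)` of this
curve is a zero of `g`; choosing square roots `s(x)` of `-g(x)`, the double points `(x, s(x))` with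
`g(x) ≠ 0` tend to `(x₀, 0)` as `x → x₀`, because `|s(x)|² = |g(x)| → 0`.
-/

open Filter Topology

/-- The points sharing their value under `f` with another point. The closure, which is part of
the definition of the double point set `D(f)`, is not taken here. -/
def doublePoints {α β : Type*} (f : α → β) : Set α :=
  {a | ∃ b, b ≠ a ∧ f a = f b}

/-- Mond's normal form `(x, v) ↦ (x, v², v p(x, v²))` of a map folding along `v = 0`, with an
arbitrary parameter space `X` in place of a coordinate line. -/
def mondNormalForm {X R : Type*} [Monoid R] (p : X → R → R) (q : X × R) : X × R × R :=
  (q.1, q.2 ^ 2, q.2 * p q.1 (q.2 ^ 2))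

theorem Sk_eq_mondNormalForm (k : ℕ) : Sk k = mondNormalForm fun u w => w + u ^ (k + 1) := by
  funext q
  simp only [Sk, mondNormalForm, Prod.mk.injEq, true_and]
  ring

section CommRing

variable {X R : Type*} [CommRing R] [NoZeroDivisors R]

theorem eq_or_eq_neg_of_mondNormalForm_eq {p : X → R → R} {q q' : X × R}
    (h : mondNormalForm p q = mondNormalForm p q') : q' = q ∨ q' = (q.1, -q.2) := by
  obtain ⟨x, v⟩ := q
  obtain ⟨x', v'⟩ := q'
  obtain rfl : x = x' := congrArg Prod.fst h
  have hsq : v ^ 2 = v' ^ 2 := congrArg (fun y => y.2.1) h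
  exact (sq_eq_sq_iff_eq_or_eq_neg.mp hsq.symm).imp (congrArg _) (congrArg _)

variable [NeZero (2 : R)]

theorem mondNormalForm_eq_neg_iff {p : X → R → R} {x : X} {v : R} :
    mondNormalForm p (x, v) = mondNormalForm p (x, -v) ↔ v = 0 ∨ p x (v ^ 2) = 0 := by
  simp only [mondNormalForm, Prod.mk.injEq, even_two.neg_pow, true_and, neg_mul]
  rw [eq_neg_iff_add_eq_zero, ← two_mul, mul_eq_zero, or_iff_right two_ne_zero, mul_eq_zero]

theorem doublePoints_mondNormalForm (p : X → R → R) :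
    doublePoints (mondNormalForm p) = {q | q.2 ≠ 0 ∧ p q.1 (q.2 ^ 2) = 0} := by
  ext ⟨x, v⟩
  constructor
  · rintro ⟨q', hne, h⟩
    obtain rfl := (eq_or_eq_neg_of_mondNormalForm_eq h).resolve_left hne
    have hv : v ≠ 0 := fun hv => hne (by simp only [hv, neg_zero])
    exact ⟨hv, (mondNormalForm_eq_neg_iff.mp h).resolve_left hv⟩
  · rintro ⟨hv, hp⟩
    have hne : -v ≠ v := fun h => hv <| by
      simpa [neg_eq_iff_add_eq_zero, ← two_mul, two_ne_zero] using h
    exact ⟨(x, -v), fun h => hne (congrArg Prod.snd h), mondNormalForm_eq_neg_iff.mpr (Or.inr hp)⟩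

end CommRing

theorem closure_doublePoints_mondNormalForm_subset {X R : Type*} [TopologicalSpace X] [CommRing R]
    [NoZeroDivisors R] [NeZero (2 : R)] [TopologicalSpace R] [ContinuousMul R] [T1Space R]
    {p : X → R → R} (hp : Continuous fun q : X × R => p q.1 q.2) :
    closure (doublePoints (mondNormalForm p)) ⊆ {q | p q.1 (q.2 ^ 2) = 0} := by
  rw [doublePoints_mondNormalForm]
  refine closure_minimal (fun q hq => hq.2) ?_
  have hcont : Continuous fun q : X × R => p q.1 (q.2 ^ 2) :=
    hp.comp (by fun_prop : Continuous fun q : X × R => (q.1, q.2 ^ 2))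
  exact isClosed_singleton.preimage hcont

theorem tendsto_zero_of_tendsto_pow_zero {ι R : Type*} [NormedRing R] [NormOneClass R]
    [NormMulClass R] {l : Filter ι} {s : ι → R} {n : ℕ} (hn : n ≠ 0)
    (h : Tendsto (fun i => s i ^ n) l (𝓝 0)) : Tendsto s l (𝓝 0) := by
  rw [← Asymptotics.isLittleO_one_iff ℝ] at h ⊢
  exact Asymptotics.IsLittleO.of_pow (by simpa only [Pi.pow_def, one_pow] using h) hn

section NormedField

variable {X 𝕜 : Type*} [TopologicalSpace X] [NormedField 𝕜] [IsSepClosed 𝕜] [NeZero (2 : 𝕜)]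
  {g : X → 𝕜}

theorem mem_closure_doublePoints_mondNormalForm_of_eq_zero {x₀ : X} (hg : ContinuousAt g x₀)
    (hdense : x₀ ∈ closure {x | g x ≠ 0}) (hx₀ : g x₀ = 0) :
    (x₀, 0) ∈ closure (doublePoints (mondNormalForm fun x w => w + g x)) := by
  choose s hs using fun x => IsSepClosed.exists_pow_nat_eq (-g x) 2
  have hs_lim : Tendsto s (𝓝 x₀) (𝓝 0) := by
    refine tendsto_zero_of_tendsto_pow_zero two_ne_zero ?_
    simpa only [hs, hx₀, neg_zero] using Tendsto.neg hg
  have hlim : Tendsto (fun x => (x, s x)) (𝓝[{x | g x ≠ 0}] x₀) (𝓝 (x₀, 0)) :=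
    (tendsto_id.prodMk_nhds hs_lim).mono_left nhdsWithin_le_nhds
  have : NeBot (𝓝[{x | g x ≠ 0}] x₀) := mem_closure_iff_nhdsWithin_neBot.mp hdense
  refine mem_closure_of_tendsto hlim ?_
  filter_upwards [self_mem_nhdsWithin] with x hx
  have hs_ne : s x ≠ 0 := fun h => hx (by simpa [h] using hs x)
  have hcurve : s x ^ 2 + g x = 0 := by rw [hs, neg_add_cancel]
  rw [doublePoints_mondNormalForm]
  exact ⟨hs_ne, hcurve⟩

theorem stmt12_general (hg : Continuous g) (hdense : Dense {x | g x ≠ 0}) :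
    closure (doublePoints (mondNormalForm fun x w => w + g x)) =
      {q : X × 𝕜 | q.2 ^ 2 + g q.1 = 0} := by
  refine (closure_doublePoints_mondNormalForm_subset (by fun_prop)).antisymm ?_
  rintro ⟨x, v⟩ (h : v ^ 2 + g x = 0)
  obtain rfl | hv := eq_or_ne v 0
  · have hx : g x = 0 := by simpa using h
    exact mem_closure_doublePoints_mondNormalForm_of_eq_zero hg.continuousAt (hdense x) hx
  · refine subset_closure ?_
    rw [doublePoints_mondNormalForm]
    exact ⟨hv, h⟩

end NormedField

theorem stmt12 (k : ℕ) (hk : 1 ≤ k) :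
    closure {q : ℂ × ℂ | ∃ q' : ℂ × ℂ, q' ≠ q ∧ Sk k q = Sk k q'} =
      {q : ℂ × ℂ | q.2 ^ 2 + q.1 ^ (k + 1) = 0} := by
  have hdense : Dense {u : ℂ | u ^ (k + 1) ≠ 0} := by
    simpa [Set.compl_def] using dense_compl_singleton (0 : ℂ)
  simpa only [doublePoints, Sk_eq_mondNormalForm] using stmt12_general (by fun_prop) hdense
end

section
/- Let $k \ge 1$ be an integer, let $R = \mathbb{C}[[u,v]]$ be the formal power series ring in two variables over $\mathbb{C}$, and let $I \subseteq R$ be the ideal generated by $2v$, $3v^2 + u^{k+1}$, and $2(k+1)u^k v^2$. Then the quotient $R/I$ is a finite-dimensional $\mathbb{C}$-vector space of dimension $k+1$. -/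
/-!
Since `2` is a unit, `I` contains `v`, and modulo `v` the other two generators become `u ^ (k + 1)`
and `0`; so `I = (u ^ (k + 1), v)`. More generally, the ideal `(X i ^ n i)_i` in finitely many
variables consists of the power series whose coefficients vanish at all monomials `m` of the box
`m i < n i`: every other monomial is divisible by some `X i ^ n i`, and choosing one such `i` for
each monomial splits a power series supported off the box into multiples of the generators. The
quotient is therefore free on the box, of rank `∏ i, n i`, which here is `(k + 1) * 1`.
-/

open MvPowerSeries

/-- The first isomorphism theorem over a base ring `R`, for a linear map out of an `R`-algebra `A`
whose kernel is an ideal `I`; it computes `A ⧸ I` as an `R`-module. The map need not be `A`-linear,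
so the kernel is compared with `I` after restriction of scalars. -/
noncomputable def quotientEquivOfKerEq {R A M : Type*} [CommRing R] [CommRing A] [Algebra R A]
    [AddCommGroup M] [Module R M] {I : Ideal A} {φ : A →ₗ[R] M}
    (hker : LinearMap.ker φ = I.restrictScalars R) (hφ : Function.Surjective φ) :
    (A ⧸ I) ≃ₗ[R] M :=
  (Submodule.Quotient.restrictScalarsEquiv R I).symm ≪≫ₗ
    Submodule.quotEquivOfEq _ _ hker.symm ≪≫ₗ φ.quotKerEquivOfSurjective hφ

section Box

variable {σ R : Type*} [CommRing R]

variable (R) in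
/-- The ideal generated by powers `X i ^ n i` of the variables. The ramification ideal reduces
to one of this form; an exponent `1` encodes a variable which is itself a generator. -/
noncomputable def varPowIdeal (n : σ → ℕ) : Ideal (MvPowerSeries σ R) :=
  Ideal.span (Set.range fun i => X i ^ n i)

lemma coeff_eq_zero_of_mem_varPowIdeal {n : σ → ℕ} {f : MvPowerSeries σ R}
    (hf : f ∈ varPowIdeal R n) {m : σ →₀ ℕ} (hm : ∀ i, m i < n i) : coeff m f = 0 := by
  obtain ⟨c, rfl⟩ := Finsupp.mem_ideal_span_range_iff_exists_finsupp.1 hf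
  rw [Finsupp.sum, map_sum]
  exact Finset.sum_eq_zero fun i _ => X_pow_dvd_iff.1 (dvd_mul_left _ _) m (hm i)

lemma varPowIdeal_fin_two (a b : ℕ) :
    varPowIdeal R ![a, b] = Ideal.span {X 0 ^ a, X 1 ^ b} := by
  rw [varPowIdeal]
  congr 1
  ext
  simp [eq_comm]

variable [Finite σ]

/-- The coefficients of a power series at the monomials `∏ i, X i ^ m i` of the box `m i < n i`;
the linear map whose kernel is `varPowIdeal R n`. The box is encoded as `∀ i, Fin (n i)`, so that
its cardinality is visibly `∏ i, n i`. -/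
noncomputable def boxCoeff (n : σ → ℕ) : MvPowerSeries σ R →ₗ[R] ((∀ i, Fin (n i)) → R) :=
  LinearMap.pi fun a => coeff (Finsupp.equivFunOnFinite.symm fun i => (a i : ℕ))

lemma boxCoeff_eq_zero_iff {n : σ → ℕ} {f : MvPowerSeries σ R} :
    boxCoeff n f = 0 ↔ ∀ m : σ →₀ ℕ, (∀ i, m i < n i) → coeff m f = 0 := by
  refine ⟨fun h m hm => ?_, fun h => funext fun a => h _ fun i => (a i).isLt⟩
  have : Finsupp.equivFunOnFinite.symm (fun i => m i) = m := Finsupp.equivFunOnFinite_symm_coe m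
  simpa only [boxCoeff, LinearMap.pi_apply, Pi.zero_apply, this] using
    congrFun h fun i => ⟨m i, hm i⟩

lemma boxCoeff_surjective (n : σ → ℕ) :
    Function.Surjective (boxCoeff n : MvPowerSeries σ R →ₗ[R] _) := by
  classical
  intro c
  let f : MvPowerSeries σ R := fun m =>
    if h : ∀ i, m i < n i then c fun i => ⟨m i, h i⟩ else 0
  exact ⟨f, funext fun a => dif_pos fun i => (a i).isLt⟩

lemma mem_varPowIdeal_of_coeff_eq_zero {n : σ → ℕ} {f : MvPowerSeries σ R}
    (hf : ∀ m : σ →₀ ℕ, (∀ i, m i < n i) → coeff m f = 0) : f ∈ varPowIdeal R n := by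
  classical
  have := Fintype.ofFinite σ
  have exists_split (m : σ →₀ ℕ) :
      ∃ c : σ → R, (∀ i, m i < n i → c i = 0) ∧ ∑ i, c i = coeff m f := by
    by_cases hm : ∀ i, m i < n i
    · exact ⟨0, fun _ _ => rfl, by simp [hf m hm]⟩
    · obtain ⟨j, hj⟩ := not_forall.1 hm
      refine ⟨Pi.single j (coeff m f), fun i hi => ?_, by simp⟩
      exact Pi.single_eq_of_ne (by rintro rfl; exact hj hi) _
  choose c c_eq_zero sum_c using exists_split
  let g (i : σ) : MvPowerSeries σ R := fun m => c m i
  have X_pow_dvd_g (i : σ) : X i ^ n i ∣ g i := X_pow_dvd_iff.2 fun m => c_eq_zero m i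
  have sum_g : ∑ i, g i = f := by
    ext m
    exact (map_sum (coeff m) g _).trans (sum_c m)
  rw [← sum_g]
  exact Ideal.sum_mem _ fun i _ =>
    Ideal.mem_of_dvd _ (X_pow_dvd_g i) (Ideal.subset_span ⟨i, rfl⟩)

lemma ker_boxCoeff (n : σ → ℕ) :
    LinearMap.ker (boxCoeff n) = (varPowIdeal R n).restrictScalars R := by
  ext f
  rw [LinearMap.mem_ker, boxCoeff_eq_zero_iff, Submodule.restrictScalars_mem]
  exact ⟨mem_varPowIdeal_of_coeff_eq_zero, fun hf _ => coeff_eq_zero_of_mem_varPowIdeal hf⟩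

/-- The isomorphism induced by `boxCoeff n`, which exhibits the quotient by `varPowIdeal R n` as a
free module of rank `∏ i, n i`. -/
noncomputable def quotientVarPowIdealEquiv (n : σ → ℕ) :
    (MvPowerSeries σ R ⧸ varPowIdeal R n) ≃ₗ[R] ((∀ i, Fin (n i)) → R) :=
  quotientEquivOfKerEq (ker_boxCoeff n) (boxCoeff_surjective n)

end Box

lemma finrank_quotient_varPowIdeal {σ R : Type*} [Fintype σ] [CommRing R] [Nontrivial R]
    (n : σ → ℕ) :
    Module.finrank R (MvPowerSeries σ R ⧸ varPowIdeal R n) = ∏ i, n i := by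
  classical
  rw [(quotientVarPowIdealEquiv n).finrank_eq, Module.finrank_fintype_fun_eq_card, Fintype.card_pi]
  simp only [Fintype.card_fin]

lemma span_triple_eq_span_pair_of_isUnit {A : Type*} [CommRing A] {e v w p q : A} (he : IsUnit e)
    (hp : v ∣ p - w) (hq : v ∣ q) : Ideal.span {e * v, p, q} = Ideal.span {w, v} := by
  obtain ⟨a, ha⟩ := hp
  obtain rfl : p = w + v * a := by linear_combination ha
  have span_q_le : Ideal.span {q} ≤ Ideal.span {v} := Ideal.span_singleton_le_span_singleton.2 hq
  calc Ideal.span {e * v, w + v * a, q}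
      = Ideal.span {w + v * a} ⊔ (Ideal.span {v} ⊔ Ideal.span {q}) := by
        rw [Ideal.span_insert, Ideal.span_insert, Ideal.span_singleton_mul_left_unit he,
          sup_left_comm]
    _ = Ideal.span {w + v * a, v} := by rw [sup_eq_left.2 span_q_le, Ideal.span_insert]
    _ = Ideal.span {w, v} := Ideal.span_pair_add_right_mul ..

lemma span_minors_eq {A : Type*} [CommRing A] (h2 : IsUnit (2 : A)) (u v : A) (k : ℕ) :
    Ideal.span {2 * v, 3 * v ^ 2 + u ^ (k + 1), 2 * ((k : A) + 1) * u ^ k * v ^ 2} =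
      Ideal.span {u ^ (k + 1), v} :=
  span_triple_eq_span_pair_of_isUnit h2 ⟨3 * v, by ring⟩ ⟨2 * (k + 1) * u ^ k * v, by ring⟩

theorem stmt16_general {R : Type*} [CommRing R] [Nontrivial R] (h2 : IsUnit (2 : R)) (k : ℕ)
    (u v : MvPowerSeries (Fin 2) R)
    (hu : u = MvPowerSeries.X 0) (hv : v = MvPowerSeries.X 1)
    (I : Ideal (MvPowerSeries (Fin 2) R))
    (hI : I = Ideal.span
      {2 * v, 3 * v ^ 2 + u ^ (k + 1), 2 * ((k : MvPowerSeries (Fin 2) R) + 1) * u ^ k * v ^ 2}) :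
    Module.Free R (MvPowerSeries (Fin 2) R ⧸ I) ∧ Module.Finite R (MvPowerSeries (Fin 2) R ⧸ I) ∧
      Module.finrank R (MvPowerSeries (Fin 2) R ⧸ I) = k + 1 := by
  have isUnit_two : IsUnit (2 : MvPowerSeries (Fin 2) R) := by
    simpa only [map_ofNat] using h2.map (C (σ := Fin 2) (R := R))
  obtain rfl : I = varPowIdeal R ![k + 1, 1] := by
    rw [hI, span_minors_eq isUnit_two, hu, hv, varPowIdeal_fin_two, pow_one]
  let e := quotientVarPowIdealEquiv (R := R) ![k + 1, 1]
  refine ⟨.of_equiv e.symm, .equiv e.symm, ?_⟩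
  rw [finrank_quotient_varPowIdeal, Fin.prod_univ_two]
  exact mul_one (k + 1)

theorem stmt16 (k : ℕ) (hk : 1 ≤ k)
    (u v : MvPowerSeries (Fin 2) ℂ)
    (hu : u = MvPowerSeries.X 0) (hv : v = MvPowerSeries.X 1)
    (I : Ideal (MvPowerSeries (Fin 2) ℂ))
    (hI : I = Ideal.span
      {2 * v, 3 * v ^ 2 + u ^ (k + 1), 2 * ((k : MvPowerSeries (Fin 2) ℂ) + 1) * u ^ k * v ^ 2}) :
    FiniteDimensional ℂ (MvPowerSeries (Fin 2) ℂ ⧸ I) ∧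
      Module.finrank ℂ (MvPowerSeries (Fin 2) ℂ ⧸ I) = k + 1 :=
  (stmt16_general (IsUnit.mk0 2 two_ne_zero) k u v hu hv I hI).2
end

section
/- Let $R = \mathbb{C}[[u,v]]$ be the formal power series ring in two variables over $\mathbb{C}$, and let $I \subseteq R$ be the ideal generated by $4uv$, $2u(3v^2+u)$ (i.e. $6uv^2+2u^2$), and $2v(3u^2+v)$ (i.e. $6u^2v+2v^2$). Then the quotient $R/I$ is a finite-dimensional $\mathbb{C}$-vector space of dimension $3$. -/
/-!
Since `2` is invertible, `uv ∈ I`, and subtracting multiples of `uv` from the other two generators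
gives `u², v² ∈ I`; hence `I = 𝔪²` with `𝔪 = (u, v)`. For any finite set of variables, `𝔪²` is the
kernel of the `1`-jet map `f ↦ (f(0), ∇f(0))`: if `f(0) = 0`, write `f = ∑ gᵢ Xᵢ`; then
`∂ᵢf(0) = gᵢ(0)`, so the gradient vanishes exactly when every `gᵢ` lies in `𝔪`. The quotient is thus
free with one coordinate for the value and one for each variable.
-/

section VariableIdeal

open MvPowerSeries

variable {σ R : Type*} [CommSemiring R]

theorem mem_span_X_image_of_coeff_eq_zero (s : Finset σ) {f : MvPowerSeries σ R}
    (hf : ∀ n : σ →₀ ℕ, (∀ i ∈ s, n i = 0) → coeff n f = 0) :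
    f ∈ Ideal.span ((X : σ → MvPowerSeries σ R) '' s) := by
  classical
  induction s using Finset.induction_on generalizing f with
  | empty => simp [show f = 0 from MvPowerSeries.ext fun n => by simpa using hf n]
  | insert i s _ ih =>
    let f₀ : MvPowerSeries σ R := fun n => if n i = 0 then coeff n f else 0
    let f₁ : MvPowerSeries σ R := fun n => if n i = 0 then 0 else coeff n f
    have coeff_f₀ (n : σ →₀ ℕ) : coeff n f₀ = if n i = 0 then coeff n f else 0 := rfl
    have coeff_f₁ (n : σ →₀ ℕ) : coeff n f₁ = if n i = 0 then 0 else coeff n f := rfl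
    have hsum : f = f₁ + f₀ := MvPowerSeries.ext fun n => by
      rw [map_add, coeff_f₀, coeff_f₁]
      split_ifs <;> simp
    have hdvd : X i ∣ f₁ := X_dvd_iff.2 fun n hn => by rw [coeff_f₁, if_pos hn]
    have hf₀ : f₀ ∈ Ideal.span ((X : σ → MvPowerSeries σ R) '' s) := ih fun n hn => by
      rw [coeff_f₀, ite_eq_right_iff]
      exact fun hi => hf n (by simpa [hi] using hn)
    rw [Finset.coe_insert, Set.image_insert_eq, Ideal.span_insert, hsum]
    exact Submodule.add_mem_sup (Ideal.mem_span_singleton.2 hdvd) hf₀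

theorem span_range_X_eq_ker_constantCoeff [Finite σ] :
    Ideal.span (Set.range X) = RingHom.ker (constantCoeff (σ := σ) (R := R)) := by
  have := Fintype.ofFinite σ
  refine le_antisymm (Ideal.span_le.2 ?_) fun f hf => ?_
  · rintro _ ⟨i, rfl⟩
    exact constantCoeff_X i
  · rw [← Set.image_univ, ← Finset.coe_univ]
    refine mem_span_X_image_of_coeff_eq_zero _ fun n hn => ?_
    rwa [show n = 0 from Finsupp.ext fun i => hn i (Finset.mem_univ i)]

end VariableIdeal

section OneJet

open MvPowerSeries TrivSqZeroExt

variable (σ R : Type*) [CommSemiring R]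

/-- The `1`-jet at the origin, i.e. the value together with the gradient. Taking values in the
trivial square-zero extension turns the Leibniz rule into multiplicativity. -/
noncomputable def oneJet : MvPowerSeries σ R →ₐ[R] TrivSqZeroExt R (σ → R) where
  toFun f := inl (constantCoeff f) + inr fun i => constantCoeff (pderiv R i f)
  map_one' := by ext <;> simp
  map_mul' f g := by ext <;> simp
  map_zero' := by ext <;> simp
  map_add' f g := by ext <;> simp
  commutes' r := by ext <;> simp [MvPowerSeries.algebraMap_apply, TrivSqZeroExt.algebraMap_eq_inl]

variable {σ R}

@[simp]
theorem fst_oneJet (f : MvPowerSeries σ R) : (oneJet σ R f).fst = constantCoeff f := by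
  simp [oneJet]

@[simp]
theorem snd_oneJet (f : MvPowerSeries σ R) (i : σ) :
    (oneJet σ R f).snd i = constantCoeff (pderiv R i f) := by
  simp [oneJet]

theorem constantCoeff_pderiv_sum_mul_X [Fintype σ] (g : σ → MvPowerSeries σ R) (i : σ) :
    constantCoeff (pderiv R i (∑ j, g j * X j)) = constantCoeff (g i) := by
  classical
  simp [pderiv_X, Pi.single_apply, apply_ite constantCoeff]

theorem oneJet_surjective [Finite σ] : Function.Surjective (oneJet σ R) := by
  have := Fintype.ofFinite σ
  refine fun x => ⟨C x.fst + ∑ i, C (x.snd i) * X i, TrivSqZeroExt.ext ?_ (funext fun i => ?_)⟩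
  · rw [fst_oneJet]
    simp
  · rw [snd_oneJet, map_add, map_add, constantCoeff_pderiv_sum_mul_X]
    simp

theorem ker_oneJet [Finite σ] :
    RingHom.ker (oneJet σ R) = Ideal.span (Set.range X) ^ 2 := by
  have := Fintype.ofFinite σ
  apply le_antisymm
  · intro f hf
    have hf₀ : constantCoeff f = 0 := by rw [← fst_oneJet, hf, fst_zero]
    have hf₁ (i : σ) : constantCoeff (pderiv R i f) = 0 := by
      rw [← snd_oneJet, hf, snd_zero, Pi.zero_apply]
    obtain ⟨g, rfl⟩ := Ideal.mem_span_range_iff_exists_fun.1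
      (span_range_X_eq_ker_constantCoeff.ge hf₀)
    have hg (i : σ) : g i ∈ Ideal.span (Set.range X) := by
      rw [span_range_X_eq_ker_constantCoeff, RingHom.mem_ker, ← constantCoeff_pderiv_sum_mul_X]
      exact hf₁ i
    rw [sq]
    exact Ideal.sum_mem _ fun i _ => Ideal.mul_mem_mul (hg i) (Ideal.subset_span ⟨i, rfl⟩)
  · rw [span_range_X_eq_ker_constantCoeff, sq, Ideal.mul_le]
    intro f hf g hg
    rw [RingHom.mem_ker] at hf hg ⊢
    ext <;> simp [hf, hg]

end OneJet

/-- The underlying module of a trivial square-zero extension, as a product; it gives `1`-jets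
coordinates in a free module. -/
def trivSqZeroExtEquivProd {R M : Type*} [Semiring R] [AddCommMonoid M] [Module R M] :
    TrivSqZeroExt R M ≃ₗ[R] R × M where
  toFun x := (x.fst, x.snd)
  invFun p := TrivSqZeroExt.inl p.1 + TrivSqZeroExt.inr p.2
  map_add' _ _ := rfl
  map_smul' _ _ := rfl
  left_inv := TrivSqZeroExt.inl_fst_add_inr_snd_eq
  right_inv p := by simp

section Quotient

open MvPowerSeries

variable {σ R : Type*} [CommRing R]

/-- The quotient by the square of the ideal generated by the variables is free, with coordinates
the value and the gradient at the origin. -/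
noncomputable def quotientSpanXSqEquiv [Finite σ] :
    (MvPowerSeries σ R ⧸ (Ideal.span (Set.range X) ^ 2 : Ideal (MvPowerSeries σ R))) ≃ₗ[R]
      R × (σ → R) :=
  (Ideal.quotientEquivAlgOfEq R ker_oneJet.symm).toLinearEquiv ≪≫ₗ
    (Ideal.quotientKerAlgEquivOfSurjective
      (oneJet_surjective (σ := σ) (R := R))).toLinearEquiv ≪≫ₗ
    trivSqZeroExtEquivProd

theorem finrank_quotient_span_X_sq [Fintype σ] [Nontrivial R] :
    Module.finrank R
      (MvPowerSeries σ R ⧸ (Ideal.span (Set.range X) ^ 2 : Ideal (MvPowerSeries σ R))) =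
      Fintype.card σ + 1 := by
  rw [quotientSpanXSqEquiv.finrank_eq, Module.finrank_prod, Module.finrank_self,
    Module.finrank_fintype_fun_eq_card, add_comm]

end Quotient

theorem span_units_mul_add_eq_span_pair_sq {S : Type*} [CommRing S] {a b c d e : S}
    (hc : IsUnit c) (hd : IsUnit d) (he : IsUnit e) (x y : S) :
    Ideal.span {c * (a * b), x * (a * b) + d * a ^ 2, y * (a * b) + e * b ^ 2} =
      Ideal.span {a, b} ^ 2 := by
  rw [sq (Ideal.span _), Ideal.span_pair_mul_span_pair]
  set J := Ideal.span {c * (a * b), x * (a * b) + d * a ^ 2, y * (a * b) + e * b ^ 2}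
  set K := Ideal.span {a * a, a * b, b * a, b * b}
  have haa : a ^ 2 ∈ K := Ideal.subset_span (by simp [sq])
  have hab : a * b ∈ K := Ideal.subset_span (by simp)
  have hbb : b ^ 2 ∈ K := Ideal.subset_span (by simp [sq])
  have hab' : a * b ∈ J := (J.unit_mul_mem_iff_mem hc).1 (Ideal.subset_span (by simp))
  have haa' : a ^ 2 ∈ J := (J.unit_mul_mem_iff_mem hd).1 <|
    (J.add_mem_iff_right (J.mul_mem_left x hab')).1 (Ideal.subset_span (by simp))
  have hbb' : b ^ 2 ∈ J := (J.unit_mul_mem_iff_mem he).1 <|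
    (J.add_mem_iff_right (J.mul_mem_left y hab')).1 (Ideal.subset_span (by simp))
  apply le_antisymm <;> rw [Ideal.span_le] <;> rintro _ (rfl | rfl | rfl | rfl)
  · exact K.mul_mem_left c hab
  · exact K.add_mem (K.mul_mem_left x hab) (K.mul_mem_left d haa)
  · exact K.add_mem (K.mul_mem_left y hab) (K.mul_mem_left e hbb)
  · exact sq a ▸ haa'
  · exact hab'
  · exact mul_comm a b ▸ hab'
  · exact sq b ▸ hbb'

theorem stmt19_general {R : Type*} [CommRing R] [Nontrivial R] (h2 : IsUnit (2 : R))
    (u v : MvPowerSeries (Fin 2) R)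
    (hu : u = MvPowerSeries.X 0) (hv : v = MvPowerSeries.X 1)
    (I : Ideal (MvPowerSeries (Fin 2) R))
    (hI : I = Ideal.span
      {4 * u * v, 6 * u * v ^ 2 + 2 * u ^ 2, 6 * u ^ 2 * v + 2 * v ^ 2}) :
    Module.Free R (MvPowerSeries (Fin 2) R ⧸ I) ∧
      Module.Finite R (MvPowerSeries (Fin 2) R ⧸ I) ∧
      Module.finrank R (MvPowerSeries (Fin 2) R ⧸ I) = 3 := by
  have isUnit_two : IsUnit (2 : MvPowerSeries (Fin 2) R) := by
    simpa only [map_ofNat] using h2.map (MvPowerSeries.C (σ := Fin 2))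
  have isUnit_four : IsUnit (4 : MvPowerSeries (Fin 2) R) := by
    simpa [show (2 : MvPowerSeries (Fin 2) R) * 2 = 4 by norm_num] using isUnit_two.mul isUnit_two
  have hrange : Set.range (MvPowerSeries.X : Fin 2 → MvPowerSeries (Fin 2) R) = {u, v} := by
    rw [hu, hv]; ext; simp [Fin.exists_fin_two, eq_comm]
  obtain rfl : I = Ideal.span (Set.range MvPowerSeries.X) ^ 2 := by
    rw [hI, hrange, ← span_units_mul_add_eq_span_pair_sq isUnit_four isUnit_two isUnit_two
      (6 * v) (6 * u)]
    ring_nf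
  exact ⟨.of_equiv quotientSpanXSqEquiv.symm, .equiv quotientSpanXSqEquiv.symm,
    by simp [finrank_quotient_span_X_sq]⟩

theorem stmt19
    (u v : MvPowerSeries (Fin 2) ℂ)
    (hu : u = MvPowerSeries.X 0) (hv : v = MvPowerSeries.X 1)
    (I : Ideal (MvPowerSeries (Fin 2) ℂ))
    (hI : I = Ideal.span
      {4 * u * v, 6 * u * v ^ 2 + 2 * u ^ 2, 6 * u ^ 2 * v + 2 * v ^ 2}) :
    FiniteDimensional ℂ (MvPowerSeries (Fin 2) ℂ ⧸ I) ∧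
      Module.finrank ℂ (MvPowerSeries (Fin 2) ℂ ⧸ I) = 3 :=
  (stmt19_general two_ne_zero.isUnit u v hu hv I hI).2
end
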